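/- arXiv:2204.08760 — 7 statements merged into one kernel-verified Lean document; each statement's English description precedes it below -/
import Mathlib

section
/- Let q = p^t be a prime power, n > 2, c ∈ GF(q^n) (with c ≠ 1 if p = 2), u ∈ GF(q^n) nonzero, F : GF(q^n) → GF(q^n) a PcN function with respect to c, and f : GF(q^n) → GF(q). Define H : GF(q^n) → GF(q^n) by H(x) = F(x) + u·f(x). Then H is NOT PcN with respect to c if and only if there exist a ∈ GF(q^n), elements x ≠ y in GF(q^n), and ε = α − c·β ≠ 0 with α, β ∈ GF(q), such that (F(x+a) − c·F(x)) − (F(y+a) − c·F(y)) = −ε·u and (f(x+a) − c·f(x)) − (f(y+a) − c·f(y)) = ε. -/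
open scoped Classical

/-- The number of solutions `x` of `F(x+a) - c·F(x) = b`. -/
noncomputable def cDeltaCount {K : Type*} [Field K] [Fintype K]
    (c : K) (F : K → K) (a b : K) : ℕ :=
  (Finset.univ.filter fun x => F (x + a) - c * F x = b).card

/-- The `c`-differential uniformity: the maximum of `cDeltaCount` over all `a, b`,
where `a ≠ 0` is required when `c = 1`. -/
noncomputable def cDU {K : Type*} [Field K] [Fintype K] (c : K) (F : K → K) : ℕ :=
  (Finset.univ.filter fun ab : K × K => c = 1 → ab.1 ≠ 0).sup
    fun ab => cDeltaCount c F ab.1 ab.2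

/-- `F` is perfect `c`-nonlinear. -/
def IsPcN {K : Type*} [Field K] [Fintype K] (c : K) (F : K → K) : Prop :=
  cDU c F = 1

/-!
Put `H = F + u * f`. A collision of `x ≠ y` under the `c`-derivative of `H` at `a` says that the
`c`-derivatives of `F` at `x` and `y` differ by `-ε * u`, where `ε` is the difference of those of
`f`. As `F` is PcN, `ε = 0` is impossible, and regrouping
`ε = (f (x + a) - f (y + a)) - c * (f x - f y)` gives the form `α - c * β`. Conversely, `ε ≠ 0`
rules out the pair `c = 1`, `a = 0`, where the `c`-derivative of `f` vanishes.
-/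

/-- The `c`-derivative of `F` at `a`, as a function of `x`; the paper writes it `_cD_aF`. -/
def cDerivative {R : Type*} [Ring R] (c : R) (F : R → R) (a : R) : R → R :=
  fun x => F (x + a) - c * F x

theorem cDerivative_one_zero {R : Type*} [Ring R] (F : R → R) : cDerivative 1 F 0 = 0 := by
  ext x
  simp [cDerivative]

section Collisions

variable {R : Type*} [CommRing R]

theorem cDerivative_add_mul (c u : R) (F g : R → R) (a x : R) :
    cDerivative c (fun z => F z + u * g z) a x =
      cDerivative c F a x + u * cDerivative c g a x := by
  simp only [cDerivative]
  ring

theorem cDerivative_add_mul_eq_iff (c u : R) (F g : R → R) (a x y : R) :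
    cDerivative c (fun z => F z + u * g z) a x = cDerivative c (fun z => F z + u * g z) a y ↔
      cDerivative c F a x - cDerivative c F a y =
        -((cDerivative c g a x - cDerivative c g a y) * u) := by
  rw [cDerivative_add_mul, cDerivative_add_mul]
  constructor <;> intro h <;> linear_combination h

end Collisions

theorem exists_cDerivative_sub_cDerivative_eq {R : Type*} [Ring R] {S : AddSubgroup R}
    (c : R) (f : R → S) (a x y : R) :
    ∃ α β : S, cDerivative c (fun z => (f z : R)) a x - cDerivative c (fun z => (f z : R)) a y =
      (α : R) - c * (β : R) := by
  refine ⟨f (x + a) - f (y + a), f x - f y, ?_⟩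
  simp only [cDerivative, AddSubgroup.coe_sub, mul_sub]
  abel

section Uniformity

variable {K : Type*} [Field K] [Fintype K] {c : K} {F : K → K}

theorem cDU_le_iff {m : ℕ} :
    cDU c F ≤ m ↔ ∀ a, (c = 1 → a ≠ 0) → ∀ b, cDeltaCount c F a b ≤ m := by
  simp only [cDU, Finset.sup_le_iff, Finset.mem_filter_univ, Prod.forall]
  exact forall_congr' fun a => forall_comm

theorem forall_cDeltaCount_le_one_iff_injective {a : K} :
    (∀ b, cDeltaCount c F a b ≤ 1) ↔ Function.Injective (cDerivative c F a) := by
  simp only [cDeltaCount, Finset.card_le_one, Finset.mem_filter_univ]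
  constructor
  · intro h x y hxy
    exact h _ x hxy y rfl
  · rintro h b x rfl y hy
    exact h hy.symm

theorem one_le_cDU (c : K) (F : K → K) : 1 ≤ cDU c F := by
  by_contra! h
  have hcount : cDeltaCount c F 1 (cDerivative c F 1 0) = 0 :=
    Nat.le_zero.mp (cDU_le_iff.mp (Nat.lt_one_iff.mp h).le 1 (fun _ => one_ne_zero) _)
  rw [cDeltaCount, Finset.card_eq_zero, Finset.filter_eq_empty_iff] at hcount
  exact hcount (Finset.mem_univ 0) rfl

theorem isPcN_iff_injective_cDerivative :
    IsPcN c F ↔ ∀ a, (c = 1 → a ≠ 0) → Function.Injective (cDerivative c F a) := by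
  rw [IsPcN, ← (one_le_cDU c F).ge_iff_eq', cDU_le_iff]
  simp only [forall_cDeltaCount_le_one_iff_injective]

theorem IsPcN.not_isPcN_add_mul_iff (hF : IsPcN c F) (u : K) (g : K → K) :
    ¬ IsPcN c (fun z => F z + u * g z) ↔
      ∃ a x y, x ≠ y ∧ cDerivative c g a x - cDerivative c g a y ≠ 0 ∧
        cDerivative c F a x - cDerivative c F a y =
          -((cDerivative c g a x - cDerivative c g a y) * u) := by
  rw [isPcN_iff_injective_cDerivative] at hF ⊢
  simp only [Function.Injective, cDerivative_add_mul_eq_iff]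
  push Not
  constructor
  · rintro ⟨a, ha, x, y, hxy, hne⟩
    refine ⟨a, x, y, hne, fun hg => hne (hF a ha ?_), hxy⟩
    rwa [hg, zero_mul, neg_zero, sub_eq_zero] at hxy
  · rintro ⟨a, x, y, hne, hg, hxy⟩
    refine ⟨a, ?_, x, y, hxy, hne⟩
    rintro rfl rfl
    simp [cDerivative_one_zero] at hg

theorem statement0_general (hF : IsPcN c F) (u : K) {S : AddSubgroup K} (f : K → S) :
    ¬ IsPcN c (fun x => F x + u * (f x : K)) ↔
      ∃ (a x y : K) (α β : S), x ≠ y ∧ (α : K) - c * (β : K) ≠ 0 ∧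
        cDerivative c F a x - cDerivative c F a y = -(((α : K) - c * (β : K)) * u) ∧
        cDerivative c (fun z => (f z : K)) a x - cDerivative c (fun z => (f z : K)) a y =
          (α : K) - c * (β : K) := by
  rw [hF.not_isPcN_add_mul_iff]
  constructor
  · rintro ⟨a, x, y, hne, hε, hxy⟩
    obtain ⟨α, β, hαβ⟩ := exists_cDerivative_sub_cDerivative_eq c f a x y
    rw [hαβ] at hε hxy
    exact ⟨a, x, y, α, β, hne, hε, hxy, hαβ⟩
  · rintro ⟨a, x, y, α, β, hne, hε, hxy, hαβ⟩
    rw [← hαβ] at hε hxy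
    exact ⟨a, x, y, hne, hε, hxy⟩

end Uniformity

theorem statement0 (p t n : ℕ) (hp : p.Prime) (ht : 1 ≤ t) (hn : 2 < n)
    (K : Type*) [Field K] [Fintype K] (hK : Nat.card K = (p ^ t) ^ n)
    (Fq : Subfield K) (hFq : Nat.card Fq = p ^ t)
    (c : K) (hc : p = 2 → c ≠ 1)
    (u : K) (hu : u ≠ 0)
    (F : K → K) (hF : IsPcN c F)
    (f : K → Fq) :
    ¬ IsPcN c (fun x => F x + u * (f x : K)) ↔
      ∃ (a x y : K) (α β : Fq), x ≠ y ∧ (α : K) - c * (β : K) ≠ 0 ∧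
        (F (x + a) - c * F x) - (F (y + a) - c * F y) = -(((α : K) - c * (β : K)) * u) ∧
        ((f (x + a) : K) - c * (f x : K)) - ((f (y + a) : K) - c * (f y : K)) =
          (α : K) - c * (β : K) :=
  statement0_general hF u (S := Fq.toAddSubgroup) f
end

section
/- Let q = p^t be a prime power, n > 2, c ∈ GF(q), F : GF(q^n) → GF(q^n) a PcN function with respect to c, and u, v ∈ GF(q^n) such that Tr_n(−u·v) ≠ 1. Then the function H(x) = F(x) + u·Tr_n(v·F(x)) is PcN with respect to c. -/
open scoped Classical

/-!
Write `H = L ∘ F`, where `L y = y + Tr (v y) u` is `GF(q)`-linear. It is bijective because it is the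
identity plus the rank-one map `y ↦ f y • u` for the linear form `f y = Tr (v y)`, and
`1 + f u = 1 - Tr (-u v)` is nonzero. Since `c ∈ GF(q)`, linearity gives
`H (x + a) - c H x = L (F (x + a) - c F x)`, so passing from `F` to `H` only permutes the
right-hand sides `b` of the equations being counted.
-/

section LinearEquiv

variable {k K : Type*} [CommSemiring k] [Field K] [Fintype K] [Algebra k K]

theorem cDeltaCount_linearEquiv_comp (c : k) (L : K ≃ₗ[k] K) (F : K → K) (a b : K) :
    cDeltaCount (algebraMap k K c) (L ∘ F) a b =
      cDeltaCount (algebraMap k K c) F a (L.symm b) := by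
  simp only [cDeltaCount, Function.comp_apply, ← Algebra.smul_def, ← map_smul, ← map_sub,
    LinearEquiv.eq_symm_apply]

theorem cDU_linearEquiv_comp_le (c : k) (L : K ≃ₗ[k] K) (F : K → K) :
    cDU (algebraMap k K c) (L ∘ F) ≤ cDU (algebraMap k K c) F := by
  refine Finset.sup_le fun ab hab => ?_
  rw [cDeltaCount_linearEquiv_comp]
  exact Finset.le_sup (f := fun ab : K × K => cDeltaCount (algebraMap k K c) F ab.1 ab.2)
    (b := (ab.1, L.symm ab.2)) (by simpa only [Finset.mem_filter_univ] using hab)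

theorem cDU_linearEquiv_comp (c : k) (L : K ≃ₗ[k] K) (F : K → K) :
    cDU (algebraMap k K c) (L ∘ F) = cDU (algebraMap k K c) F := by
  refine (cDU_linearEquiv_comp_le c L F).antisymm ?_
  calc cDU (algebraMap k K c) F
      = cDU (algebraMap k K c) (L.symm ∘ L ∘ F) := by
        simp only [Function.comp_def, LinearEquiv.symm_apply_apply]
    _ ≤ cDU (algebraMap k K c) (L ∘ F) := cDU_linearEquiv_comp_le c L.symm (L ∘ F)

end LinearEquiv

theorem cDU_add_dual_smul {k K : Type*} [CommRing k] [Field K] [Fintype K] [Algebra k K]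
    (c : k) (F : K → K) {f : Module.Dual k K} {u : K} (hfu : IsUnit (1 + f u)) :
    cDU (algebraMap k K c) (fun x => F x + f (F x) • u) = cDU (algebraMap k K c) F := by
  simpa only [Function.comp_def, LinearEquiv.dilatransvection.apply] using
    cDU_linearEquiv_comp c (LinearEquiv.dilatransvection hfu) F

theorem cDU_add_mul_trace {k K : Type*} [Field k] [Field K] [Fintype K] [Algebra k K]
    (c : k) (F : K → K) {u v : K} (huv : Algebra.trace k K (-(u * v)) ≠ 1) :
    cDU (algebraMap k K c) (fun x => F x + u * algebraMap k K (Algebra.trace k K (v * F x))) =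
      cDU (algebraMap k K c) F := by
  let f : Module.Dual k K := Algebra.trace k K ∘ₗ LinearMap.mulLeft k v
  have hfu : 1 + f u ≠ 0 := by
    have hf : f u = -Algebra.trace k K (-(u * v)) := by
      simp only [f, LinearMap.comp_apply, LinearMap.mulLeft_apply, map_neg, neg_neg, mul_comm]
    rw [hf, ← sub_eq_add_neg]
    exact sub_ne_zero.mpr huv.symm
  simpa only [f, LinearMap.comp_apply, LinearMap.mulLeft_apply, Algebra.smul_def, mul_comm u] using
    cDU_add_dual_smul c F hfu.isUnit

theorem algebraMap_trace_eq_sum_range_pow {k K : Type*} [Field k] [Field K] [Finite K]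
    [Algebra k K] {q n : ℕ} (hk : Nat.card k = q) (hK : Nat.card K = q ^ n) (x : K) :
    algebraMap k K (Algebra.trace k K x) = ∑ i ∈ Finset.range n, x ^ q ^ i := by
  have : Finite k := Finite.of_injective _ (algebraMap k K).injective
  have hn : Module.finrank k K = n := by
    refine Nat.pow_right_injective (Finite.one_lt_card (α := k)) ?_
    calc Nat.card k ^ Module.finrank k K
        = Nat.card K := Module.natCard_eq_pow_finrank.symm
      _ = Nat.card k ^ n := by rw [hK, hk]
  rw [FiniteField.algebraMap_trace_eq_sum_pow, hn, hk]

theorem statement4_general {K : Type*} [Field K] [Fintype K] {q n : ℕ}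
    (hK : Nat.card K = q ^ n) (Fq : Subfield K) (hFq : Nat.card Fq = q)
    {c : K} (hc : c ∈ Fq) (F : K → K) {u v : K}
    (htr : (∑ i ∈ Finset.range n, (-(u * v)) ^ q ^ i) ≠ 1) :
    cDU c (fun x => F x + u * ∑ i ∈ Finset.range n, (v * F x) ^ q ^ i) = cDU c F := by
  simp only [← algebraMap_trace_eq_sum_range_pow hFq hK] at htr ⊢
  exact cDU_add_mul_trace (⟨c, hc⟩ : Fq) F fun h => htr (by rw [h, map_one])

theorem statement4 (p t n : ℕ) (hp : p.Prime) (ht : 1 ≤ t) (hn : 2 < n)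
    (K : Type*) [Field K] [Fintype K] (hK : Nat.card K = (p ^ t) ^ n)
    (Fq : Subfield K) (hFq : Nat.card Fq = p ^ t)
    (c : K) (hc : c ∈ Fq)
    (F : K → K) (hF : IsPcN c F)
    (u v : K)
    (htr : (∑ i ∈ Finset.range n, (-(u * v)) ^ (p ^ t) ^ i) ≠ 1) :
    IsPcN c (fun x => F x + u * ∑ i ∈ Finset.range n, (v * F x) ^ (p ^ t) ^ i) :=
  (statement4_general hK Fq hFq hc F htr).trans hF
end

section
/- Let q = p^t be a prime power, n > 2, and let L₁, L₂ : GF(q^n) → GF(q^n) be bijective linearized polynomials with coefficients in GF(q), i.e., L_i(x) = Σ_{j=0}^{n−1} a_{ij} x^{q^j} with all a_{ij} ∈ GF(q), each inducing a bijection of GF(q^n). Let γ ∈ GF(q^n) be nonzero with Tr_n(γ) = 0. Then the function H(x) = L₁(x) + L₁(γ)·Tr_n(L₂(x)) is PcN with respect to every c ∈ GF(q^n) \ {1}. -/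
open scoped Classical

/-!
For `γ` of trace zero, `H = L₁ ∘ (x ↦ x + Tr (L₂ x) • γ)`. The trace is invariant under the
Frobenius automorphism, so `Tr ∘ L₂` is a scalar multiple of `Tr` and vanishes at `γ`; hence the
inner map is a transvection, which is invertible, and `H` is additive and injective. For additive
`H`, the `c`-derivative of `H` at `a` is `(1 - c) H + H a`, again injective when `c ≠ 1`.
-/

section PcN

variable {K : Type*} [Field K] [Fintype K] {c : K}

lemma isPcN_of_injective_cDerivative {F : K → K} (hc : c ≠ 1)
    (hF : ∀ a, Function.Injective fun x => F (x + a) - c * F x) : IsPcN c F := by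
  refine le_antisymm (Finset.sup_le fun ab _ => Finset.card_le_one.2 fun x hx y hy => ?_) ?_
  · exact hF ab.1 ((Finset.mem_filter.1 hx).2.trans (Finset.mem_filter.1 hy).2.symm)
  · let b := F (0 + 0) - c * F 0
    have solution_exists : 1 ≤ cDeltaCount c F 0 b := Finset.card_pos.2 ⟨0, by simp [b]⟩
    exact solution_exists.trans <|
      Finset.le_sup (f := fun ab : K × K => cDeltaCount c F ab.1 ab.2) (b := (0, b)) (by simp [hc])

lemma isPcN_of_injective (f : K →+ K) (hf : Function.Injective f) (hc : c ≠ 1) : IsPcN c f := by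
  refine isPcN_of_injective_cDerivative hc fun a x y hxy => hf ?_
  have cDerivative_eq (z : K) : f (z + a) - c * f z = (1 - c) * f z + f a := by
    rw [map_add]; ring
  simp only [cDerivative_eq, add_left_inj] at hxy
  exact mul_left_cancel₀ (sub_ne_zero.2 hc.symm) hxy

lemma isPcN_add_smul {k : Type*} [CommRing k] [Module k K] (L : K →ₗ[k] K)
    (hL : Function.Injective L) (φ : Module.Dual k K) {γ : K} (hγ : φ γ = 0) (hc : c ≠ 1) :
    IsPcN c fun x => L x + φ x • L γ := by
  have comp_transvection : (fun x => L x + φ x • L γ) = L ∘ₗ LinearMap.transvection φ γ := by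
    ext x; simp [LinearMap.transvection.apply]
  rw [comp_transvection]
  exact isPcN_of_injective (L ∘ₗ LinearMap.transvection φ γ).toAddMonoidHom
    (hL.comp (LinearEquiv.transvection hγ).injective) hc

end PcN

section Trace

variable {k K : Type*} [Field k] [Field K] [Algebra k K]

lemma trace_pow_card_pow [Finite k] [Algebra.IsAlgebraic k K] (j : ℕ) (x : K) :
    Algebra.trace k K (x ^ Nat.card k ^ j) = Algebra.trace k K x := by
  have := Fintype.ofFinite k
  simpa [FiniteField.coe_frobeniusAlgEquivOfAlgebraic_iterate] using
    Algebra.trace_eq_of_algEquiv (FiniteField.frobeniusAlgEquivOfAlgebraic k K ^ j) x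

lemma algebraMap_trace_eq_sum_pow_of_card [Finite K] {n : ℕ}
    (hn : Nat.card K = Nat.card k ^ n) (x : K) :
    algebraMap k K (Algebra.trace k K x) = ∑ i ∈ Finset.range n, x ^ Nat.card k ^ i := by
  have := Finite.of_injective _ (algebraMap k K).injective
  have finrank_eq : Module.finrank k K = n :=
    Nat.pow_right_injective Finite.one_lt_card <| (Module.natCard_eq_pow_finrank).symm.trans hn
  rw [FiniteField.algebraMap_trace_eq_sum_pow, finrank_eq]

end Trace

section Linearized

variable (k : Type*) [Field k] [Fintype k] {m : ℕ}

/-- The `k`-linear endomorphism `x ↦ ∑ j, a j * x ^ q ^ j` of `K` induced by the linearized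
polynomial with coefficients `a`, where `q` is the order of `k`. -/
def linearizedMap {K : Type*} [CommRing K] [Algebra k K] (a : Fin m → K) : K →ₗ[k] K :=
  ∑ j : Fin m, a j • ((FiniteField.frobeniusAlgHom k K) ^ (j : ℕ)).toLinearMap

lemma linearizedMap_apply {K : Type*} [CommRing K] [Algebra k K] (a : Fin m → K) (x : K) :
    linearizedMap k a x = ∑ j : Fin m, a j * x ^ Nat.card k ^ (j : ℕ) := by
  simp [linearizedMap, AlgHom.coe_pow, FiniteField.coe_frobeniusAlgHom, pow_iterate]

lemma trace_linearizedMap_algebraMap {K : Type*} [Field K] [Algebra k K] [Algebra.IsAlgebraic k K]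
    (a : Fin m → k) (x : K) :
    Algebra.trace k K (linearizedMap k (fun j => algebraMap k K (a j)) x) =
      (∑ j, a j) * Algebra.trace k K x := by
  simp only [linearizedMap_apply, ← Algebra.smul_def, map_sum, map_smul, trace_pow_card_pow,
    smul_eq_mul, Finset.sum_mul]

end Linearized

theorem statement5_general {k K : Type*} [Field k] [Field K] [Fintype K] [Algebra k K]
    {q n l m : ℕ} (hk : Nat.card k = q) (hK : Nat.card K = q ^ n)
    (a₁ : Fin l → K) (a₂ : Fin m → k) (L₁ L₂ : K → K)
    (hL₁ : ∀ x, L₁ x = ∑ j : Fin l, a₁ j * x ^ q ^ (j : ℕ))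
    (hL₂ : ∀ x, L₂ x = ∑ j : Fin m, algebraMap k K (a₂ j) * x ^ q ^ (j : ℕ))
    (hinj : Function.Injective L₁) {γ : K} (hγ : ∑ i ∈ Finset.range n, γ ^ q ^ i = 0)
    {c : K} (hc : c ≠ 1) :
    IsPcN c fun x => L₁ x + L₁ γ * ∑ i ∈ Finset.range n, L₂ x ^ q ^ i := by
  subst hk
  have := Finite.of_injective _ (algebraMap k K).injective
  have := Fintype.ofFinite k
  obtain rfl : L₁ = linearizedMap k a₁ := by
    ext x; rw [hL₁, linearizedMap_apply]
  let M₂ : K →ₗ[k] K := linearizedMap k fun j => algebraMap k K (a₂ j)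
  obtain rfl : L₂ = M₂ := by
    ext x; rw [hL₂, linearizedMap_apply]
  simp only [← algebraMap_trace_eq_sum_pow_of_card hK, map_eq_zero] at hγ ⊢
  have trace_M₂_γ : Algebra.trace k K (M₂ γ) = 0 := by
    rw [trace_linearizedMap_algebraMap, hγ, mul_zero]
  simpa [Algebra.smul_def, mul_comm] using
    isPcN_add_smul (linearizedMap k a₁) hinj (Algebra.trace k K ∘ₗ M₂) trace_M₂_γ hc

theorem statement5 (p t n : ℕ) (hp : p.Prime) (ht : 1 ≤ t) (hn : 2 < n)
    (K : Type*) [Field K] [Fintype K] (hK : Nat.card K = (p ^ t) ^ n)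
    (Fq : Subfield K) (hFq : Nat.card Fq = p ^ t)
    (a₁ a₂ : Fin n → Fq) (L₁ L₂ : K → K)
    (hL₁ : ∀ x, L₁ x = ∑ j : Fin n, (a₁ j : K) * x ^ (p ^ t) ^ (j : ℕ))
    (hL₂ : ∀ x, L₂ x = ∑ j : Fin n, (a₂ j : K) * x ^ (p ^ t) ^ (j : ℕ))
    (hb₁ : Function.Bijective L₁) (hb₂ : Function.Bijective L₂)
    (γ : K) (hγ : γ ≠ 0) (hγtr : ∑ i ∈ Finset.range n, γ ^ (p ^ t) ^ i = 0)
    (c : K) (hc : c ≠ 1) :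
    IsPcN c (fun x => L₁ x + L₁ γ * ∑ i ∈ Finset.range n, (L₂ x) ^ (p ^ t) ^ i) :=
  statement5_general hFq hK (fun j => a₁ j) a₂ L₁ L₂ hL₁ hL₂ hb₁.injective hγtr hc
end

section
/- Let q = p^t be a prime power, n > 2, δ ≥ 1 an integer, u ∈ GF(q^n) nonzero, c ∈ GF(q^n) (with c ≠ 1 if p = 2), F : GF(q^n) → GF(q^n) a function with c-differential uniformity _cΔ_F ≤ δ, f : GF(q^n) → GF(q), and H(x) = F(x) + u·f(x). For a, ε ∈ GF(q^n) let A_{a,ε} = {x ∈ GF(q^n) : f(x+a) − c·f(x) = ε}. Then _cΔ_H > δ if and only if there exist a ∈ GF(q^n) and pairwise distinct elements x₁, …, x_{δ+1} ∈ GF(q^n), not all lying in one common set A_{a,ε}, such that for all i ≠ j one has (F(x_i+a) − c·F(x_i)) − (F(x_j+a) − c·F(x_j)) = −u·((f(x_i+a) − c·f(x_i)) − (f(x_j+a) − c·f(x_j))). (Note that each difference (f(x_i+a) − c·f(x_i)) − (f(x_j+a) − c·f(x_j)) automatically belongs to the set {α − c·β : α, β ∈ GF(q)}.) -/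
open scoped Classical

/-!
The `δ + 1` points witnessing `_cΔ_H > δ` are points at which `_cD_a H = _cD_a F + u · _cD_a f`
takes one common value `b`. If `_cD_a f` were constant on them, equal to `ε`, then `_cD_a F` would
be equal to `b - u ε` at all of them, contradicting `_cΔ_F ≤ δ`. Conversely, if `_cD_a f` is not
constant then `c = 1` forces `a ≠ 0`, since `_1D_0 f` vanishes identically, so `a` is a direction
that counts towards `_cΔ_H`.
-/

/-- The `c`-derivative `_cD_a F` of `F` in direction `a`, as a function of `x`. -/
def cDeriv {R : Type*} [Ring R] (c : R) (F : R → R) (a x : R) : R :=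
  F (x + a) - c * F x

theorem cDeriv_one_zero {R : Type*} [Ring R] (F : R → R) : cDeriv 1 F 0 = 0 := by
  funext x
  simp [cDeriv]

theorem ne_zero_of_cDeriv_one_not_const {R ι : Type*} [Ring R] {f : R → R} {a : R} {x : ι → R}
    (hf : ¬ ∃ ε, ∀ i, cDeriv 1 f a (x i) = ε) : a ≠ 0 := by
  rintro rfl
  exact hf ⟨0, fun i => congrFun (cDeriv_one_zero f) (x i)⟩

theorem cDeriv_add_const_mul {R : Type*} [CommRing R] (c u : R) (F f : R → R) (a x : R) :
    cDeriv c (fun y => F y + u * f y) a x = cDeriv c F a x + u * cDeriv c f a x := by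
  simp only [cDeriv]
  ring

theorem exists_forall_eq_iff_pairwise {ι α : Type*} [Nonempty α] (g : ι → α) :
    (∃ b, ∀ i, g i = b) ↔ Pairwise fun i j => g i = g j := by
  rw [← Set.pairwise_univ, Set.pairwise_eq_iff_exists_eq]
  simp only [Set.mem_univ, forall_const]

theorem cDeriv_add_const_mul_const_iff_pairwise {R ι : Type*} [CommRing R] (c u : R) (F f : R → R)
    (a : R) (x : ι → R) :
    (∃ b, ∀ i, cDeriv c (fun y => F y + u * f y) a (x i) = b) ↔
      Pairwise fun i j => cDeriv c F a (x i) - cDeriv c F a (x j) =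
        -(u * (cDeriv c f a (x i) - cDeriv c f a (x j))) := by
  simp only [exists_forall_eq_iff_pairwise, cDeriv_add_const_mul]
  refine forall₃_congr fun i j _ => ?_
  constructor <;> intro h <;> linear_combination h

theorem le_card_iff_exists_injective {α : Type*} (s : Finset α) (m : ℕ) :
    m ≤ s.card ↔ ∃ x : Fin m → α, Function.Injective x ∧ ∀ i, x i ∈ s := by
  constructor
  · intro hm
    obtain ⟨e⟩ : Nonempty (Fin m ↪ s) := Function.Embedding.nonempty_of_card_le (by simpa using hm)
    exact ⟨fun i => e i, Subtype.val_injective.comp e.injective, fun i => (e i).2⟩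
  · rintro ⟨x, hx, hxs⟩
    simpa using Finset.card_le_card_of_injOn (s := Finset.univ) x (fun i _ => hxs i) hx.injOn

section FiniteField

variable {K : Type*} [Field K] [Fintype K]

theorem lt_cDeltaCount_iff (c : K) (F : K → K) (a b : K) (m : ℕ) :
    m < cDeltaCount c F a b ↔
      ∃ x : Fin (m + 1) → K, Function.Injective x ∧ ∀ i, cDeriv c F a (x i) = b := by
  rw [← Nat.succ_le_iff, cDeltaCount, le_card_iff_exists_injective]
  simp only [Finset.mem_filter_univ, cDeriv]

theorem lt_cDU_iff (c : K) (F : K → K) (m : ℕ) :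
    m < cDU c F ↔ ∃ a, (c = 1 → a ≠ 0) ∧ ∃ x : Fin (m + 1) → K,
      Function.Injective x ∧ ∃ b, ∀ i, cDeriv c F a (x i) = b := by
  simp only [cDU, Finset.lt_sup_iff, Finset.mem_filter_univ, Prod.exists, lt_cDeltaCount_iff]
  constructor
  · rintro ⟨a, b, ha, x, hx, hb⟩
    exact ⟨a, ha, x, hx, b, hb⟩
  · rintro ⟨a, ha, x, hx, b, hb⟩
    exact ⟨a, b, ha, x, hx, hb⟩

theorem cDeriv_not_const_of_cDU_le {δ : ℕ} {c u : K} {F f : K → K} (hF : cDU c F ≤ δ) {a : K}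
    (ha : c = 1 → a ≠ 0) {x : Fin (δ + 1) → K} (hx : Function.Injective x)
    (hH : ∃ b, ∀ i, cDeriv c (fun y => F y + u * f y) a (x i) = b) :
    ¬ ∃ ε, ∀ i, cDeriv c f a (x i) = ε := by
  rintro ⟨ε, hε⟩
  obtain ⟨b, hb⟩ := hH
  have hF_const (i) : cDeriv c F a (x i) = b - u * ε := by
    rw [← hb i, ← hε i, cDeriv_add_const_mul, add_sub_cancel_right]
  exact hF.not_gt ((lt_cDU_iff c F δ).2 ⟨a, ha, x, hx, b - u * ε, hF_const⟩)

theorem statement6_general {δ : ℕ} {c : K} {F : K → K} (hF : cDU c F ≤ δ) (u : K) (f : K → K) :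
    δ < cDU c (fun x => F x + u * f x) ↔
      ∃ (a : K) (x : Fin (δ + 1) → K), Function.Injective x ∧
        (¬ ∃ ε, ∀ i, cDeriv c f a (x i) = ε) ∧
        Pairwise fun i j => cDeriv c F a (x i) - cDeriv c F a (x j) =
          -(u * (cDeriv c f a (x i) - cDeriv c f a (x j))) := by
  simp only [lt_cDU_iff, ← cDeriv_add_const_mul_const_iff_pairwise]
  constructor
  · rintro ⟨a, ha, x, hx, hH⟩
    exact ⟨a, x, hx, cDeriv_not_const_of_cDU_le hF ha hx hH, hH⟩
  · rintro ⟨a, x, hx, hf, hH⟩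
    have ha : c = 1 → a ≠ 0 := by
      rintro rfl
      exact ne_zero_of_cDeriv_one_not_const hf
    exact ⟨a, ha, x, hx, hH⟩

end FiniteField

theorem statement6 (p t n : ℕ) (hp : p.Prime) (ht : 1 ≤ t) (hn : 2 < n)
    (K : Type*) [Field K] [Fintype K] (hK : Nat.card K = (p ^ t) ^ n)
    (Fq : Subfield K) (hFq : Nat.card Fq = p ^ t)
    (δ : ℕ) (hδ : 1 ≤ δ)
    (u : K) (hu : u ≠ 0)
    (c : K) (hc : p = 2 → c ≠ 1)
    (F : K → K) (hF : cDU c F ≤ δ)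
    (f : K → Fq) :
    δ < cDU c (fun x => F x + u * (f x : K)) ↔
      ∃ (a : K) (x : Fin (δ + 1) → K), Function.Injective x ∧
        (¬ ∃ ε : K, ∀ i, (f (x i + a) : K) - c * (f (x i) : K) = ε) ∧
        (∀ i j, i ≠ j →
          (F (x i + a) - c * F (x i)) - (F (x j + a) - c * F (x j)) =
            -(u * (((f (x i + a) : K) - c * (f (x i) : K)) -
                ((f (x j + a) : K) - c * (f (x j) : K))))) :=
  statement6_general hF u fun x => (f x : K)
end

section
/- Let q = p^t be a prime power, n > 2, u ∈ GF(q^n) nonzero, F : GF(q^n) → GF(q^n) a bijective GF(q)-linear map (a linearized permutation polynomial), f : GF(q^n) → GF(q), and H(x) = F(x) + u·f(x). (i) If c ∈ GF(q^n) \ GF(q) and for some a, b ∈ GF(q^n) the equation H(z+a) − c·H(z) = b has exactly q² − 1 solutions, then for every γ ∈ GF(q) with γ ≠ 0 there exist two distinct solutions x, y of this equation with (1−c)·F(x−y) = u·(c−1)·γ. (ii) If c ∈ GF(q) \ {1}, q ≥ 3, and for some a, b ∈ GF(q^n) the equation H(z+a) − c·H(z) = b has exactly q − 1 solutions, then for every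 γ ∈ GF(q) with γ ≠ 0 there exist two distinct solutions x, y with (1−c)·F(x−y) = u·(c−1)·γ. -/
open scoped Classical

/-!
On the solution set `S` of `H (z + a) - c * H z = b` the value `(1 - c) * F z` differs from the
constant `b - F a` by `u * (c * f z - f (z + a))`. So the injective map `z ↦ u⁻¹ * ((1 - c) * F z)`
sends `S` into a coset of the `GF(q)`-span of `{1, c}`, which has at most `q ^ 2` elements, and only
`q` if `c ∈ GF(q)`. As soon as the image of `S` fills more than half of this coset, it meets each of
its translates by elements of the span, so its differences exhaust the span; in particular they
include `(c - 1) * γ`.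
-/

section Pigeonhole

variable {G : Type*} [AddGroup G]

lemma ncard_setOf_sub_mem (V : AddSubgroup G) (d : G) : {x | x - d ∈ V}.ncard = Nat.card V := by
  have himage : {x | x - d ∈ V} = (· + d) '' (V : Set G) := by
    simp only [Set.image_add_right, ← sub_eq_add_neg, Set.preimage, SetLike.mem_coe]
  rw [himage, Set.ncard_image_of_injective _ (add_left_injective d)]
  rfl

lemma exists_sub_eq_of_card_lt_two_mul_ncard {V : AddSubgroup G} [Finite V] {A : Set G} {d : G}
    (hA : ∀ x ∈ A, x - d ∈ V) (hcard : Nat.card V < 2 * A.ncard) {v : G} (hv : v ∈ V) :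
    ∃ x ∈ A, ∃ y ∈ A, x - y = v := by
  by_contra! hne
  have hcoset : {x | x - d ∈ V}.Finite := by
    apply Set.finite_of_ncard_pos
    rw [ncard_setOf_sub_mem]
    exact Nat.card_pos
  have htranslate : (v + ·) '' A ⊆ {x | x - d ∈ V} := by
    rintro _ ⟨y, hy, rfl⟩
    simpa only [Set.mem_ofPred_eq, add_sub_assoc] using V.add_mem hv (hA y hy)
  have hdisj : Disjoint A ((v + ·) '' A) := by
    rw [Set.disjoint_right]
    rintro _ ⟨y, hy, rfl⟩ hx
    exact hne _ hx y hy (add_sub_cancel_right v y)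
  have hle : 2 * A.ncard ≤ Nat.card V := calc
    2 * A.ncard = (A ∪ (v + ·) '' A).ncard := by
      rw [Set.ncard_union_eq hdisj (hcoset.subset hA) (hcoset.subset htranslate),
        Set.ncard_image_of_injective _ (add_right_injective v), two_mul]
    _ ≤ {x | x - d ∈ V}.ncard := Set.ncard_le_ncard (Set.union_subset hA htranslate) hcoset
    _ = Nat.card V := ncard_setOf_sub_mem V d
  exact hcard.not_ge hle

end Pigeonhole

section Span

variable {k M : Type*} [DivisionRing k] [Finite k] [AddCommGroup M] [Module k M]

lemma natCard_span_le_pow_ncard {s : Set M} (hs : s.Finite) :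
    Nat.card (Submodule.span k s) ≤ Nat.card k ^ s.ncard := by
  lift s to Finset M using hs
  rw [Module.natCard_eq_pow_finrank (K := k), Set.ncard_coe_finset]
  exact Nat.pow_le_pow_right Nat.card_pos (finrank_span_finset_le_card s)

lemma natCard_span_pair_le (x y : M) :
    Nat.card (Submodule.span k {x, y}) ≤ Nat.card k ^ 2 :=
  (natCard_span_le_pow_ncard (Set.toFinite _)).trans
    (Nat.pow_le_pow_right Nat.card_pos
      ((Set.ncard_insert_le x {y}).trans_eq (by rw [Set.ncard_singleton])))

lemma natCard_span_singleton_le (x : M) : Nat.card (Submodule.span k {x}) ≤ Nat.card k :=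
  (natCard_span_le_pow_ncard (Set.toFinite _)).trans_eq (by rw [Set.ncard_singleton, pow_one])

end Span

/-- The set of solutions `x` of `H(x+a) - c·H(x) = b`, whose size over a finite field is
`cDeltaCount c H a b`. -/
def cDerivFiber {K : Type*} [Field K] (c : K) (H : K → K) (a b : K) : Set K :=
  {x | H (x + a) - c * H x = b}

lemma ncard_cDerivFiber {K : Type*} [Field K] [Fintype K] (c : K) (H : K → K) (a b : K) :
    (cDerivFiber c H a b).ncard = cDeltaCount c H a b := by
  rw [cDerivFiber, Set.ncard_eq_toFinset_card', Set.toFinset_ofPred, cDeltaCount]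

section Subfield

variable {K : Type*} [Field K] {Fq : Subfield K} {c u : K} {F : K →+ K} {f : K → Fq} {a b : K}

lemma sub_mem_span_of_mem_cDerivFiber (hu : u ≠ 0) {z : K}
    (hz : z ∈ cDerivFiber c (fun z => F z + u * f z) a b) :
    u⁻¹ * ((1 - c) * F z) - u⁻¹ * (b - F a) ∈ Submodule.span Fq {1, c} := by
  change F (z + a) + u * f (z + a) - c * (F z + u * f z) = b at hz
  rw [map_add] at hz
  refine Submodule.mem_span_pair.mpr ⟨-f (z + a), f z, ?_⟩
  simp only [Subfield.smul_def, smul_eq_mul, Subfield.coe_neg]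
  field_simp
  linear_combination -hz

theorem exists_mem_cDerivFiber_of_mem_span [Finite Fq] (hu : u ≠ 0) (hF : Function.Injective F)
    (hc : c ≠ 1)
    (hcard : Nat.card (Submodule.span Fq {1, c}) <
      2 * (cDerivFiber c (fun z => F z + u * f z) a b).ncard)
    {w : K} (hw : w ∈ Submodule.span Fq {1, c}) :
    ∃ x ∈ cDerivFiber c (fun z => F z + u * f z) a b,
      ∃ y ∈ cDerivFiber c (fun z => F z + u * f z) a b, (1 - c) * F (x - y) = u * w := by
  have hc' : 1 - c ≠ 0 := sub_ne_zero.mpr hc.symm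
  have hinj : Function.Injective fun z => u⁻¹ * ((1 - c) * F z) :=
    (mul_right_injective₀ (inv_ne_zero hu)).comp ((mul_right_injective₀ hc').comp hF)
  rw [← Set.ncard_image_of_injective _ hinj] at hcard
  have := FiniteDimensional.span_of_finite Fq (Set.toFinite {1, c})
  have : Finite (Submodule.span Fq {1, c}) := Module.finite_of_finite Fq
  obtain ⟨_, ⟨x, hx, rfl⟩, _, ⟨y, hy, rfl⟩, hxy⟩ :=
    exists_sub_eq_of_card_lt_two_mul_ncard (V := (Submodule.span Fq {1, c}).toAddSubgroup)
      (Set.forall_mem_image.mpr fun _ hz => sub_mem_span_of_mem_cDerivFiber hu hz) hcard hw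
  refine ⟨x, hx, y, hy, ?_⟩
  rw [← hxy, map_sub]
  field_simp

theorem exists_ne_mem_cDerivFiber [Finite Fq] (hu : u ≠ 0) (hF : Function.Injective F) (hc : c ≠ 1)
    (hcard : Nat.card (Submodule.span Fq {1, c}) <
      2 * (cDerivFiber c (fun z => F z + u * f z) a b).ncard)
    {γ : K} (hγ : γ ∈ Fq) (hγ0 : γ ≠ 0) :
    ∃ x y, x ≠ y ∧ x ∈ cDerivFiber c (fun z => F z + u * f z) a b ∧
      y ∈ cDerivFiber c (fun z => F z + u * f z) a b ∧ (1 - c) * F (x - y) = u * (c - 1) * γ := by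
  have hmem : (c - 1) * γ ∈ Submodule.span Fq {1, c} :=
    Submodule.mem_span_pair.mpr ⟨-⟨γ, hγ⟩, ⟨γ, hγ⟩, by
      simp only [Subfield.smul_def, smul_eq_mul, Subfield.coe_neg]
      ring⟩
  obtain ⟨x, hx, y, hy, hxy⟩ := exists_mem_cDerivFiber_of_mem_span hu hF hc hcard hmem
  rw [← mul_assoc] at hxy
  refine ⟨x, y, ?_, hx, hy, hxy⟩
  rintro rfl
  rw [sub_self, map_zero, mul_zero] at hxy
  exact mul_ne_zero (mul_ne_zero hu (sub_ne_zero.mpr hc)) hγ0 hxy.symm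

lemma span_one_pair_eq_span_one (hc : c ∈ Fq) :
    Submodule.span Fq {1, c} = Submodule.span Fq {1} := by
  rw [Set.pair_comm]
  exact Submodule.span_insert_eq_span (Submodule.mem_span_singleton.mpr ⟨⟨c, hc⟩, mul_one c⟩)

end Subfield

theorem statement9_general {K : Type*} [Field K] (Fq : Subfield K) [Finite Fq] {u : K} (hu : u ≠ 0)
    (F : K →+ K) (hF : Function.Injective F) (f : K → Fq) :
    (∀ c ≠ 1, ∀ a b,
      Nat.card Fq ^ 2 < 2 * (cDerivFiber c (fun z => F z + u * f z) a b).ncard →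
      ∀ γ ∈ Fq, γ ≠ 0 →
        ∃ x y, x ≠ y ∧ x ∈ cDerivFiber c (fun z => F z + u * f z) a b ∧
          y ∈ cDerivFiber c (fun z => F z + u * f z) a b ∧
          (1 - c) * F (x - y) = u * (c - 1) * γ) ∧
    (∀ c ∈ Fq, c ≠ 1 → ∀ a b,
      Nat.card Fq < 2 * (cDerivFiber c (fun z => F z + u * f z) a b).ncard →
      ∀ γ ∈ Fq, γ ≠ 0 →
        ∃ x y, x ≠ y ∧ x ∈ cDerivFiber c (fun z => F z + u * f z) a b ∧
          y ∈ cDerivFiber c (fun z => F z + u * f z) a b ∧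
          (1 - c) * F (x - y) = u * (c - 1) * γ) :=
  ⟨fun c hc _ _ hcard _ =>
      exists_ne_mem_cDerivFiber hu hF hc ((natCard_span_pair_le 1 c).trans_lt hcard),
    fun _ hcFq hc _ _ hcard _ =>
      exists_ne_mem_cDerivFiber hu hF hc <| by
        rw [span_one_pair_eq_span_one hcFq]
        exact (natCard_span_singleton_le 1).trans_lt hcard⟩

theorem statement9 (p t n : ℕ) (hp : p.Prime) (ht : 1 ≤ t) (hn : 2 < n)
    (K : Type*) [Field K] [Fintype K] (hK : Nat.card K = (p ^ t) ^ n)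
    (Fq : Subfield K) (hFq : Nat.card Fq = p ^ t)
    (u : K) (hu : u ≠ 0)
    (F : K → K) (hFbij : Function.Bijective F)
    (hFadd : ∀ x y, F (x + y) = F x + F y)
    (hFsmul : ∀ s : K, s ∈ Fq → ∀ x : K, F (s * x) = s * F x)
    (f : K → Fq) :
    -- part (i): c ∉ GF(q)
    ((∀ c : K, c ∉ Fq → ∀ a b : K,
      (Finset.univ.filter fun z =>
          (F (z + a) + u * (f (z + a) : K)) - c * (F z + u * (f z : K)) = b).card =
        (p ^ t) ^ 2 - 1 →
      ∀ γ : K, γ ∈ Fq → γ ≠ 0 →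
        ∃ x y : K, x ≠ y ∧
          (F (x + a) + u * (f (x + a) : K)) - c * (F x + u * (f x : K)) = b ∧
          (F (y + a) + u * (f (y + a) : K)) - c * (F y + u * (f y : K)) = b ∧
          (1 - c) * F (x - y) = u * (c - 1) * γ)) ∧
    -- part (ii): c ∈ GF(q) \ {1}, q ≥ 3
    ((∀ c : K, c ∈ Fq → c ≠ 1 → 3 ≤ p ^ t → ∀ a b : K,
      (Finset.univ.filter fun z =>
          (F (z + a) + u * (f (z + a) : K)) - c * (F z + u * (f z : K)) = b).card =
        p ^ t - 1 →
      ∀ γ : K, γ ∈ Fq → γ ≠ 0 →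
        ∃ x y : K, x ≠ y ∧
          (F (x + a) + u * (f (x + a) : K)) - c * (F x + u * (f x : K)) = b ∧
          (F (y + a) + u * (f (y + a) : K)) - c * (F y + u * (f y : K)) = b ∧
          (1 - c) * F (x - y) = u * (c - 1) * γ)) := by
  obtain ⟨hi, hii⟩ := statement9_general Fq hu (AddMonoidHom.mk' F hFadd) hFbij.injective f
  have hq : 1 < p ^ t := hFq ▸ Finite.one_lt_card
  have hq2 : 2 ^ 2 ≤ (p ^ t) ^ 2 := Nat.pow_le_pow_left hq 2
  refine ⟨fun c hc a b hS => hi c (fun h => hc (h ▸ Fq.one_mem)) a b ?_,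
    fun c hc hc1 hq3 a b hS => hii c hc hc1 a b ?_⟩
  all_goals
    have hncard := (ncard_cDerivFiber c (fun z => F z + u * f z) a b).trans hS
    simp only [AddMonoidHom.mk'_apply, hncard, hFq]
    omega
end

section
/- Let p be a prime, ℓ ≥ 2, q = p^ℓ, and n = m·p for some integer m ≥ 1 (so p divides n). Let u ∈ GF(q) be nonzero and let L : GF(q^n) → GF(q^n) be a bijective GF(q)-linear map (a q-linearized permutation polynomial) that maps the subfield GF(q) bijectively onto GF(q). Then the function H₀(x) = L(x) + u·Tr_n(x) on GF(q^n) is PcN with respect to every c ∈ GF(q^n) \ {1}. -/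
open scoped Classical

/-!
If `f` is additive, then `f (x + a) - c * f x = (1 - c) * f x + f a`, so an additive permutation is
PcN for every `c ≠ 1`, and it remains to see that `L + u Tr` has trivial kernel. If
`L x = -u Tr x`, then `L x` lies in the base field `F`; since `L` maps `F` onto itself, so does `x`.
But on `F` the trace is multiplication by `[K : F]`, which vanishes when the characteristic
divides `[K : F]`, so `L x = 0` and hence `x = 0`.
-/

section PcN

variable {K : Type*} [Field K] [Fintype K] {c : K}

lemma cDeltaCount_eq_one_of_bijective {f : K → K} {a : K}
    (hf : Function.Bijective fun x => f (x + a) - c * f x) (b : K) :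
    cDeltaCount c f a b = 1 := by
  obtain ⟨x, hx, hx_unique⟩ := hf.existsUnique b
  refine Finset.card_eq_one.mpr ⟨x, ?_⟩
  ext y
  simpa only [Finset.mem_filter, Finset.mem_univ, true_and, Finset.mem_singleton]
    using ⟨hx_unique y, fun hy => hy ▸ hx⟩

lemma isPcN_of_bijective {f : K → K}
    (hf : ∀ a, (c = 1 → a ≠ 0) → Function.Bijective fun x => f (x + a) - c * f x) :
    IsPcN c f := by
  have hcount : ∀ ab ∈ Finset.univ.filter fun ab : K × K => c = 1 → ab.1 ≠ 0,
      cDeltaCount c f ab.1 ab.2 = 1 := fun ab hab =>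
    cDeltaCount_eq_one_of_bijective (hf ab.1 (Finset.mem_filter.mp hab).2) ab.2
  rw [IsPcN, cDU, Finset.sup_congr rfl hcount]
  exact Finset.sup_const ⟨(1, 0), by simp⟩ 1

lemma isPcN_addMonoidHom_of_injective (hc : c ≠ 1) {f : K →+ K} (hf : Function.Injective f) :
    IsPcN c f := by
  refine isPcN_of_bijective fun a _ => Finite.injective_iff_bijective.mp fun x y hxy => hf ?_
  have hdiff : ∀ z, f (z + a) - c * f z = (1 - c) * f z + f a := fun z => by
    rw [map_add]
    ring
  simp only [hdiff, add_left_inj] at hxy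
  exact mul_left_cancel₀ (sub_ne_zero.mpr hc.symm) hxy

end PcN

lemma injective_add_of_surjOn {G H : Type*} [AddGroup G] [AddCommGroup H] {L T : G →+ H}
    {S : Set G} {A : AddSubgroup H} (hL : Function.Injective L) (hLS : Set.SurjOn L S A)
    (hTA : ∀ x, T x ∈ A) (hTS : ∀ x ∈ S, T x = 0) : Function.Injective (L + T) := by
  refine (injective_iff_map_eq_zero (L + T)).mpr fun x hx => ?_
  have hLx : L x = -T x := eq_neg_of_add_eq_zero_left hx
  have hxS : x ∈ S := by
    obtain ⟨y, hyS, hyx⟩ := hLS (hLx ▸ neg_mem (hTA x))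
    exact hL hyx ▸ hyS
  rw [hTS x hxS, neg_zero] at hLx
  exact (injective_iff_map_eq_zero L).mp hL x hLx

lemma trace_algebraMap_eq_zero_of_dvd_finrank {R S : Type*} [CommRing R] [StrongRankCondition R]
    [CommRing S] [Algebra R S] [Module.Free R S] (p : ℕ) [CharP R p]
    (hp : p ∣ Module.finrank R S) (r : R) : Algebra.trace R S (algebraMap R S r) = 0 := by
  rw [Algebra.trace_algebraMap, nsmul_eq_mul, (CharP.cast_eq_zero_iff R p _).mpr hp, zero_mul]

lemma finrank_eq_of_natCard_eq_pow {F V : Type*} [DivisionRing F] [Finite F] [AddCommGroup V]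
    [Module F V] [Module.Finite F V] {n : ℕ} (h : Nat.card V = Nat.card F ^ n) :
    Module.finrank F V = n :=
  Nat.pow_right_injective (Finite.one_lt_card : 1 < Nat.card F)
    ((Module.natCard_eq_pow_finrank (K := F)).symm.trans h)

theorem isPcN_add_algebraMap_mul_trace {F K : Type*} [Field F] [Field K] [Fintype K] [Algebra F K]
    (p : ℕ) [CharP F p] (hp : p ∣ Module.finrank F K) {L : K →+ K} (hL : Function.Injective L)
    (hLF : Set.SurjOn L (Set.range (algebraMap F K)) (Set.range (algebraMap F K))) (u : F)
    {c : K} (hc : c ≠ 1) :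
    IsPcN c fun x => L x + algebraMap F K u * algebraMap F K (Algebra.trace F K x) := by
  let T : K →+ K := (AddMonoidHom.mulLeft (algebraMap F K u)).comp
    ((algebraMap F K : F →+ K).comp (Algebra.trace F K : K →+ F))
  have hT_range : ∀ x, T x ∈ (algebraMap F K).range.toAddSubgroup := fun x =>
    ⟨u * Algebra.trace F K x, map_mul _ _ _⟩
  have hT_zero : ∀ x ∈ Set.range (algebraMap F K), T x = 0 := by
    rintro _ ⟨r, rfl⟩
    simp [T, trace_algebraMap_eq_zero_of_dvd_finrank p hp]
  have hinj : Function.Injective (L + T) := injective_add_of_surjOn hL hLF hT_range hT_zero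
  have hcoe : (fun x => L x + algebraMap F K u * algebraMap F K (Algebra.trace F K x))
      = ⇑(L + T) := rfl
  exact hcoe ▸ isPcN_addMonoidHom_of_injective hc hinj

theorem statement10_general {p ℓ n : ℕ} (hp : p.Prime) (hpn : p ∣ n)
    {K : Type*} [Field K] [Fintype K] (hK : Nat.card K = (p ^ ℓ) ^ n)
    {Fq : Subfield K} (hFq : Nat.card Fq = p ^ ℓ) {u : K} (hu : u ∈ Fq)
    {L : K →+ K} (hL : Function.Injective L) (hLFq : Set.SurjOn L (Fq : Set K) (Fq : Set K))
    {c : K} (hc : c ≠ 1) :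
    IsPcN c (fun x => L x + u * ∑ i ∈ Finset.range n, x ^ (p ^ ℓ) ^ i) := by
  have : Fact p.Prime := ⟨hp⟩
  have : CharP Fq p := charP_of_card_eq_prime_pow (Nat.card_eq_fintype_card.symm.trans hFq)
  have hfinrank : Module.finrank Fq K = n := finrank_eq_of_natCard_eq_pow (hFq ▸ hK)
  obtain ⟨v, rfl⟩ : ∃ v : Fq, algebraMap Fq K v = u := ⟨⟨u, hu⟩, rfl⟩
  have hrange : Set.range (algebraMap Fq K) = (Fq : Set K) := Subtype.range_coe
  have hsum (x : K) : ∑ i ∈ Finset.range n, x ^ (p ^ ℓ) ^ i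
      = algebraMap Fq K (Algebra.trace Fq K x) := by
    rw [FiniteField.algebraMap_trace_eq_sum_pow, hfinrank, hFq]
  simp only [hsum]
  exact isPcN_add_algebraMap_mul_trace p (hfinrank ▸ hpn) hL (hrange.symm ▸ hLFq) v hc

theorem statement10 (p ℓ m n : ℕ) (hp : p.Prime) (hℓ : 2 ≤ ℓ) (hm : 1 ≤ m)
    (hn : n = m * p)
    (K : Type*) [Field K] [Fintype K] (hK : Nat.card K = (p ^ ℓ) ^ n)
    (Fq : Subfield K) (hFq : Nat.card Fq = p ^ ℓ)
    (u : K) (huF : u ∈ Fq) (hu : u ≠ 0)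
    (L : K → K) (hLbij : Function.Bijective L)
    (hLadd : ∀ x y, L (x + y) = L x + L y)
    (hLsmul : ∀ s : K, s ∈ Fq → ∀ x : K, L (s * x) = s * L x)
    (hLsub : Set.BijOn L (Fq : Set K) (Fq : Set K))
    (c : K) (hc : c ≠ 1) :
    IsPcN c (fun x => L x + u * ∑ i ∈ Finset.range n, x ^ (p ^ ℓ) ^ i) := by
  exact statement10_general hp (hn ▸ dvd_mul_left p m) hK hFq huF (L := .mk' L hLadd)
    hLbij.injective hLsub.surjOn hc
end

section
/- (Dillon's switching method.) Let F : GF(2^n) → GF(2^n) be an APN function, u ∈ GF(2^n) nonzero, f : GF(2^n) → GF(2) a Boolean function (its values viewed in GF(2^n)), and H(x) = F(x) + u·f(x). Then H is APN if and only if, for all a ∈ GF(2^n) with a ≠ 0 and all x, y ∈ GF(2^n), the equality F(x+a) + F(x) + F(y+a) + F(y) = u implies f(x+a) + f(x) + f(y+a) + f(y) = 0. -/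
open scoped Classical

/-- The number of solutions `x` of `F(x+a) + F(x) = b` (characteristic 2). -/
noncomputable def deltaCount2 {K : Type*} [Field K] [Fintype K]
    (F : K → K) (a b : K) : ℕ :=
  (Finset.univ.filter fun x => F (x + a) + F x = b).card

/-- The differential uniformity of `F` (characteristic 2): the maximum of
`deltaCount2 F a b` over all `a ≠ 0` and all `b`. -/
noncomputable def DU2 {K : Type*} [Field K] [Fintype K] (F : K → K) : ℕ :=
  (Finset.univ.filter fun ab : K × K => ab.1 ≠ 0).sup
    fun ab => deltaCount2 F ab.1 ab.2

/-- `F` is almost perfect nonlinear. -/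
def IsAPN {K : Type*} [Field K] [Fintype K] (F : K → K) : Prop :=
  DU2 F = 2

/-!
The four points `x, x + a, y, y + a` form a flat, and being APN means that `F` has nonzero sum over
every flat with four distinct points. Adding to `F` a function `g` with values in `{0, u}` changes
a sum over a flat by `0` or `u`, so a new zero sum appears exactly on a nondegenerate flat over
which `F` and `g` both sum to `u`. On a degenerate flat every sum is `0`, hence no condition arises
there.
-/

section Flats

variable {V W : Type*} [AddCommGroup V] [AddCommGroup W]

/-- The sum of `F` over the flat `{x, x + a, y, y + a}` of an elementary abelian `2`-group, i.e. the
second derivative of `F` at `x` in the directions `a` and `x + y`. Points are counted with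
multiplicity, so that the sum is `0` when the flat is degenerate. -/
def flatSum (F : V → W) (a x y : V) : W :=
  F (x + a) + F x + F (y + a) + F y

/-- `F` has nonzero sum over every nondegenerate flat: the APN property in terms of `flatSum`, which
makes sense for maps between arbitrary, possibly infinite, elementary abelian `2`-groups. -/
def HasNoVanishingFlat (F : V → W) : Prop :=
  ∀ a : V, a ≠ 0 → ∀ x y : V, flatSum F a x y = 0 → y = x ∨ y = x + a

theorem flatSum_add (F g : V → W) (a x y : V) :
    flatSum (F + g) a x y = flatSum F a x y + flatSum g a x y := by
  simp only [flatSum, Pi.add_apply]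
  abel

theorem flatSum_eq_zero_iff [Module (ZMod 2) W] {F : V → W} {a x y : V} :
    flatSum F a x y = 0 ↔ F (y + a) + F y = F (x + a) + F x := by
  rw [flatSum, add_assoc (F (x + a) + F x), ← ZModModule.sub_eq_add, sub_eq_zero, eq_comm]

theorem derivative_add_right [Module (ZMod 2) V] (F : V → W) (a x : V) :
    F (x + a + a) + F (x + a) = F (x + a) + F x := by
  rw [add_assoc x, ZModModule.add_self, add_zero, add_comm]

theorem flatSum_eq_zero_of_degenerate [Module (ZMod 2) V] [Module (ZMod 2) W] (F : V → W)
    {a x y : V} (h : y = x ∨ y = x + a) : flatSum F a x y = 0 := by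
  rw [flatSum_eq_zero_iff]
  rcases h with rfl | rfl
  · rfl
  · exact derivative_add_right F a x

theorem flatSum_eq_zero_or_eq [Module (ZMod 2) W] {g : V → W} {u : W}
    (hg : ∀ x, g x = 0 ∨ g x = u) (a x y : V) : flatSum g a x y = 0 ∨ flatSum g a x y = u := by
  have add_mem {v w : W} (hv : v = 0 ∨ v = u) (hw : w = 0 ∨ w = u) : v + w = 0 ∨ v + w = u := by
    rcases hv with rfl | rfl <;> rcases hw with rfl | rfl <;> simp [ZModModule.add_self]
  exact add_mem (add_mem (add_mem (hg _) (hg _)) (hg _)) (hg _)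

theorem statement14_general [Module (ZMod 2) V] [Module (ZMod 2) W] {F g : V → W} {u : W}
    (hF : HasNoVanishingFlat F) (hg : ∀ x, g x = 0 ∨ g x = u) :
    HasNoVanishingFlat (F + g) ↔
      ∀ a : V, a ≠ 0 → ∀ x y : V, flatSum F a x y = u → flatSum g a x y = 0 := by
  constructor
  · intro hFg a ha x y hFu
    rcases flatSum_eq_zero_or_eq hg a x y with hg0 | hgu
    · exact hg0
    · have hsum : flatSum (F + g) a x y = 0 := by
        rw [flatSum_add, hFu, hgu, ZModModule.add_self]
      exact flatSum_eq_zero_of_degenerate g (hFg a ha x y hsum)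
  · intro h a ha x y hsum
    rw [flatSum_add, ← ZModModule.sub_eq_add, sub_eq_zero] at hsum
    have hg0 : flatSum g a x y = 0 := by
      rcases flatSum_eq_zero_or_eq hg a x y with hg0 | hgu
      · exact hg0
      · exact h a ha x y (hsum.trans hgu)
    exact hF a ha x y (hsum.trans hg0)

end Flats

section DifferentialUniformity

variable {K : Type*} [Field K] [Fintype K]

theorem DU2_le_iff {F : K → K} {m : ℕ} :
    DU2 F ≤ m ↔ ∀ a : K, a ≠ 0 → ∀ b : K, deltaCount2 F a b ≤ m := by
  simp only [DU2, Finset.sup_le_iff, Finset.mem_filter_univ, Prod.forall]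
  exact forall_congr' fun _ => forall_comm

variable [Algebra (ZMod 2) K]

theorem pair_subset_derivative_fiber (F : K → K) (a x : K) :
    {x, x + a} ⊆ Finset.univ.filter fun y => F (y + a) + F y = F (x + a) + F x := by
  simp [Finset.insert_subset_iff, derivative_add_right]

theorem two_le_DU2 (F : K → K) : 2 ≤ DU2 F :=
  calc
    2 = ({0, 0 + 1} : Finset K).card := by rw [Finset.card_pair (by simp)]
    _ ≤ deltaCount2 F 1 (F (0 + 1) + F 0) :=
      Finset.card_le_card (pair_subset_derivative_fiber F 1 0)
    _ ≤ DU2 F := DU2_le_iff.mp le_rfl 1 one_ne_zero _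

theorem DU2_le_two_iff_hasNoVanishingFlat {F : K → K} :
    DU2 F ≤ 2 ↔ HasNoVanishingFlat F := by
  rw [DU2_le_iff]
  refine forall₂_congr fun a ha => ⟨fun h x y hxy => ?_, fun h b => ?_⟩
  · have hcard : deltaCount2 F a (F (x + a) + F x) ≤ ({x, x + a} : Finset K).card := by
      rw [Finset.card_pair (by simpa using ha)]
      exact h _
    have hfiber := Finset.eq_of_subset_of_card_le (pair_subset_derivative_fiber F a x) hcard
    have hy : y ∈ ({x, x + a} : Finset K) := by
      rw [hfiber, Finset.mem_filter_univ]
      exact flatSum_eq_zero_iff.mp hxy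
    simpa using hy
  · by_cases hb : ∃ x, F (x + a) + F x = b
    · obtain ⟨x, rfl⟩ := hb
      have hfiber : (Finset.univ.filter fun y => F (y + a) + F y = F (x + a) + F x) ⊆
          {x, x + a} := by
        intro y hy
        rw [Finset.mem_filter_univ, ← flatSum_eq_zero_iff] at hy
        simpa using h x y hy
      exact (Finset.card_le_card hfiber).trans Finset.card_le_two
    · have hzero : deltaCount2 F a b = 0 := by
        simpa [deltaCount2, Finset.filter_eq_empty_iff] using hb
      exact hzero.trans_le (Nat.zero_le 2)

theorem isAPN_iff_hasNoVanishingFlat {F : K → K} : IsAPN F ↔ HasNoVanishingFlat F := by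
  rw [← DU2_le_two_iff_hasNoVanishingFlat, IsAPN, le_antisymm_iff, and_iff_left (two_le_DU2 F)]

end DifferentialUniformity

theorem statement14 (n : ℕ) (hn : 0 < n)
    (K : Type*) [Field K] [Fintype K] (hK : Nat.card K = 2 ^ n)
    (F : K → K) (hF : IsAPN F)
    (u : K) (hu : u ≠ 0)
    (f : K → K) (hf : ∀ x, f x = 0 ∨ f x = 1) :
    IsAPN (fun x => F x + u * f x) ↔
      ∀ a : K, a ≠ 0 → ∀ x y : K,
        F (x + a) + F x + F (y + a) + F y = u →
        f (x + a) + f x + f (y + a) + f y = 0 := by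
  have : CharP K 2 := charP_of_card_eq_prime_pow (Nat.card_eq_fintype_card.symm.trans hK)
  let := ZMod.algebra K 2
  rw [isAPN_iff_hasNoVanishingFlat] at hF ⊢
  have hg (x : K) : u * f x = 0 ∨ u * f x = u := by
    simpa [hu] using hf x
  simpa only [Pi.add_def, flatSum, ← mul_add, mul_eq_zero, hu, false_or]
    using statement14_general hF hg
end
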